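/- Let X be a complex Banach space with property (α) and let T: X→X be a bounded invertible operator. Then the set {T^k : k∈ℤ} is R-bounded if and only if there exists a bounded unital algebra homomorphism w: C(𝕋;ℂ)→B(X) such that w(κ)=T, where κ(z)=z. -/

import Mathlib

noncomputable section


/-- The sign `±1` (as a complex scalar) associated to a boolean. -/
def sgn (b : Bool) : ℂ := if b then 1 else -1

/-- Rademacher average `(2^{-n} Σ_{ε ∈ {±1}^n} ‖Σ_k ε_k x_k‖²)^{1/2}`. -/
def radNorm {X : Type*} [NormedAddCommGroup X] [NormedSpace ℂ X] {n : ℕ}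
    (x : Fin n → X) : ℝ :=
  Real.sqrt ((∑ ε : Fin n → Bool, ‖∑ k, sgn (ε k) • x k‖ ^ 2) / 2 ^ n)

/-- Doubly indexed Rademacher average
`(2^{-n-m} Σ_{ε ∈ {±1}^n, η ∈ {±1}^m} ‖Σ_{i,j} ε_i η_j x_{ij}‖²)^{1/2}`. -/
def radNorm2 {X : Type*} [NormedAddCommGroup X] [NormedSpace ℂ X] {n m : ℕ}
    (x : Fin n → Fin m → X) : ℝ :=
  Real.sqrt ((∑ ε : Fin n → Bool, ∑ η : Fin m → Bool,
    ‖∑ i, ∑ j, (sgn (ε i) * sgn (η j)) • x i j‖ ^ 2) / 2 ^ (n + m))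

/-- `X` has property (α) with constant `α`. -/
def PropAlphaWith (X : Type*) [NormedAddCommGroup X] [NormedSpace ℂ X]
    (α : ℝ) : Prop :=
  ∀ (n m : ℕ) (x : Fin n → Fin m → X) (t : Fin n → Fin m → ℂ),
    (∀ i j, ‖t i j‖ ≤ 1) →
      radNorm2 (fun i j => t i j • x i j) ≤ α * radNorm2 x

/-- The operator norm of a complex matrix, acting on the finite dimensional
ℓ²-space. -/
def matOpNorm {p : Type*} [Fintype p] [DecidableEq p] (a : Matrix p p ℂ) : ℝ :=
  ‖Matrix.toEuclideanCLM (𝕜 := ℂ) a‖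

/-- `F ⊆ B(X)` is R-bounded. -/
def RBdd {X : Type*} [NormedAddCommGroup X] [NormedSpace ℂ X]
    (F : Set (X →L[ℂ] X)) : Prop :=
  ∃ C : ℝ, 0 ≤ C ∧ ∀ (n : ℕ) (T : Fin n → X →L[ℂ] X) (x : Fin n → X),
    (∀ k, T k ∈ F) → radNorm (fun k => (T k) (x k)) ≤ C * radNorm x

/-- The identity function `κ(z) = z` on the unit circle, as a continuous map. -/
def kappa : C(Circle, ℂ) := ⟨fun z => (z : ℂ), by exact continuous_subtype_val⟩

/-
From an algebra homomorphism to R-boundedness: `w` maps the unit ball of `C(𝕋)` to an R-bounded set.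
Any finite family `fₖ` in the unit ball is uniformly close to `∑ₚ fₖ(p) ψₚ²`, where `∑ₚ ψₚ² = 1`
and at most a fixed number of the bumps `ψₚ` overlap at any point, so that the signed sums
`∑ₚ ±w(ψₚ)` are uniformly bounded. Writing `w(∑ₚ fₖ(p) ψₚ²) = ∑ₚ fₖ(p) w(ψₚ) w(ψₚ)`, property (α)
removes the scalars `fₖ(p)`.

From R-boundedness to an algebra homomorphism: property (α) makes Gaussian and Rademacher averages
comparable (the central limit theorem on one side, sign symmetry on the other), and Gaussian
averages are contracted by matrices of norm at most `1` on `ℓ²`. For a Laurent polynomial `p`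
the vector `p(T)x = Tⁱ ∑ⱼ p̂(i - j) T⁻ʲ x` does not depend on `i`. Averaging over `i`, R-boundedness
removes the powers of `T` and leaves a truncated Toeplitz matrix, whose norm is at most `‖p‖_∞`.
Hence `‖p(T)‖ ≲ ‖p‖_∞`, and Laurent polynomials are dense in `C(𝕋)`.
-/

open scoped BigOperators

section Rademacher

lemma sgn_not (b : Bool) : sgn (!b) = -sgn b := by cases b <;> simp [sgn]

lemma sgn_mul_self (b : Bool) : sgn b * sgn b = 1 := by cases b <;> simp [sgn]

lemma norm_sgn (b : Bool) : ‖sgn b‖ = 1 := by cases b <;> simp [sgn]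

lemma conj_sgn (b : Bool) : (starRingEnd ℂ) (sgn b) = sgn b := by cases b <;> simp [sgn]

lemma norm_add_sq_le_two_mul {E : Type*} [SeminormedAddCommGroup E] (x y : E) :
    ‖x + y‖ ^ 2 ≤ 2 * (‖x‖ ^ 2 + ‖y‖ ^ 2) :=
  (pow_le_pow_left₀ (norm_nonneg _) (norm_add_le x y) 2).trans add_sq_le

variable {ι κ : Type*} [Fintype ι] [DecidableEq ι] [Fintype κ] [DecidableEq κ]

lemma expect_sgn_mul_sgn (k l : ι) :
    𝔼 ε : ι → Bool, sgn (ε k) * sgn (ε l) = if k = l then 1 else 0 := by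
  split_ifs with h
  · simp [h, sgn_mul_self]
  · let flip : (ι → Bool) → ι → Bool := fun ε => Function.update ε k (!ε k)
    have hflip : Function.Involutive flip := fun ε => by simp [flip]
    refine self_eq_neg.mp ?_
    rw [← Finset.expect_neg_distrib]
    refine Fintype.expect_equiv hflip.toPerm _ _ fun ε => ?_
    simp [flip, Function.update_of_ne (Ne.symm h), sgn_not]

variable {X : Type*} [NormedAddCommGroup X] [NormedSpace ℂ X]

/-- The squared Rademacher norm `‖∑ₖ εₖ ⊗ xₖ‖²` in `Rad(X)`, over an arbitrary finite index type.
Squares of norms are averaged so that no square root ever needs to be manipulated. -/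
def radSq (x : ι → X) : ℝ := 𝔼 ε : ι → Bool, ‖∑ k, sgn (ε k) • x k‖ ^ 2

lemma radSq_nonneg (x : ι → X) : 0 ≤ radSq x := Finset.expect_nonneg fun _ _ => by positivity

lemma radNorm_sq {n : ℕ} (x : Fin n → X) : radNorm x ^ 2 = radSq x := by
  rw [radNorm, Real.sq_sqrt (by positivity), radSq, Fintype.expect_eq_sum_div_card]
  simp

lemma radSq_comp_equiv (e : κ ≃ ι) (x : ι → X) : radSq (x ∘ e) = radSq x := by
  refine Fintype.expect_equiv (e.arrowCongr (Equiv.refl Bool)) _ _ fun ε => ?_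
  rw [← Equiv.sum_comp e (fun k => sgn _ • x k)]
  simp

lemma expect_norm_sum_sgn_mul_sq (c : ι → ℂ) :
    𝔼 ε : ι → Bool, ‖∑ k, sgn (ε k) * c k‖ ^ 2 = ∑ k, ‖c k‖ ^ 2 := by
  have expand (ε : ι → Bool) : ((‖∑ k, sgn (ε k) * c k‖ ^ 2 : ℝ) : ℂ)
      = ∑ k, ∑ l, c k * (starRingEnd ℂ) (c l) * (sgn (ε k) * sgn (ε l)) := by
    push_cast
    rw [← Complex.mul_conj', map_sum, Finset.sum_mul_sum]
    refine Finset.sum_congr rfl fun k _ => Finset.sum_congr rfl fun l _ => ?_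
    rw [map_mul, conj_sgn]
    ring
  apply Complex.ofReal_injective
  rw [Complex.ofReal_expect]
  simp_rw [expand, Finset.expect_sum_comm, ← Finset.mul_expect, expect_sgn_mul_sgn]
  simp [Complex.mul_conj']

lemma radSq_smul_const (c : ι → ℂ) (y : X) :
    radSq (fun k => c k • y) = (∑ k, ‖c k‖ ^ 2) * ‖y‖ ^ 2 := by
  rw [← expect_norm_sum_sgn_mul_sq, Finset.expect_mul]
  exact Finset.expect_congr rfl fun ε _ => by
    simp_rw [smul_smul, ← Finset.sum_smul, norm_smul, mul_pow]

lemma radSq_add_le (x y : ι → X) :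
    radSq (fun k => x k + y k) ≤ 2 * (radSq x + radSq y) := by
  simp only [radSq, ← Finset.expect_add_distrib, Finset.mul_expect, smul_add,
    Finset.sum_add_distrib]
  exact Finset.expect_le_expect fun ε _ => norm_add_sq_le_two_mul _ _

lemma radSq_const_smul (c : ℂ) (x : ι → X) : radSq (fun k => c • x k) = ‖c‖ ^ 2 * radSq x := by
  simp only [radSq, smul_comm _ c, ← Finset.smul_sum, norm_smul, mul_pow, ← Finset.mul_expect]

/-- The set `F` of operators is R-bounded with constant `C`. -/
def RBddWith (F : Set (X →L[ℂ] X)) (C : ℝ) : Prop :=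
  ∀ (n : ℕ) (T : Fin n → X →L[ℂ] X) (x : Fin n → X),
    (∀ k, T k ∈ F) → radNorm (fun k => T k (x k)) ≤ C * radNorm x

lemma RBddWith.radSq_le {F : Set (X →L[ℂ] X)} {C : ℝ} (hF : RBddWith F C)
    {T : ι → X →L[ℂ] X} (hT : ∀ k, T k ∈ F) (x : ι → X) :
    radSq (fun k => T k (x k)) ≤ C ^ 2 * radSq x := by
  let e := (Fintype.equivFin ι).symm
  have h := hF _ (T ∘ e) (x ∘ e) fun k => hT _
  rw [← radSq_comp_equiv e, ← radSq_comp_equiv e x, ← radNorm_sq, ← radNorm_sq, ← mul_pow]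
  exact pow_le_pow_left₀ (Real.sqrt_nonneg _) h 2

lemma RBddWith.of_radSq_le {F : Set (X →L[ℂ] X)} {C : ℝ} (hC : 0 ≤ C)
    (hF : ∀ (n : ℕ) (T : Fin n → X →L[ℂ] X) (x : Fin n → X), (∀ k, T k ∈ F) →
      radSq (fun k => T k (x k)) ≤ C ^ 2 * radSq x) : RBddWith F C := fun n T x hT => by
  refine le_of_sq_le_sq ?_ (mul_nonneg hC (Real.sqrt_nonneg _))
  rw [mul_pow, radNorm_sq, radNorm_sq]
  exact hF n T x hT

lemma radNorm2_sq {n m : ℕ} (x : Fin n → Fin m → X) :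
    radNorm2 x ^ 2 = 𝔼 ε : Fin n → Bool, radSq fun j => ∑ i, sgn (ε i) • x i j := by
  rw [radNorm2, Real.sq_sqrt (by positivity)]
  simp only [radSq, Fintype.expect_eq_sum_div_card, ← Finset.sum_div, div_div, Finset.smul_sum,
    smul_smul]
  simp only [Finset.sum_comm (s := (Finset.univ : Finset (Fin m))), mul_comm, pow_add]
  simp

lemma PropAlphaWith.expect_radSq_le {α : ℝ} (hα : PropAlphaWith X α) (x : ι → κ → X)
    {t : ι → κ → ℂ} (ht : ∀ i j, ‖t i j‖ ≤ 1) :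
    𝔼 ε : ι → Bool, radSq (fun j => ∑ i, sgn (ε i) • t i j • x i j) ≤
      α ^ 2 * 𝔼 ε : ι → Bool, radSq (fun j => ∑ i, sgn (ε i) • x i j) := by
  let e := (Fintype.equivFin ι).symm
  let f := (Fintype.equivFin κ).symm
  have reindex (z : ι → κ → X) : 𝔼 ε : ι → Bool, radSq (fun j => ∑ i, sgn (ε i) • z i j) =
      radNorm2 (fun i j => z (e i) (f j)) ^ 2 := by
    rw [radNorm2_sq]
    refine (Fintype.expect_equiv (e.arrowCongr (Equiv.refl Bool)) _ _ fun ε => ?_).symm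
    rw [← radSq_comp_equiv f]
    refine congrArg radSq (funext fun j => ?_)
    simp [← Equiv.sum_comp e (fun i => sgn _ • z i (f j))]
  rw [reindex fun i j => t i j • x i j, reindex, ← mul_pow]
  exact pow_le_pow_left₀ (Real.sqrt_nonneg _) (hα _ _ _ _ fun i j => ht _ _) 2

end Rademacher

section SumsOfMultipliers

lemma expect_sq_le_expect_sq {κ : Type*} (f : κ → ℝ) (s : Finset κ) :
    (𝔼 i ∈ s, f i) ^ 2 ≤ 𝔼 i ∈ s, f i ^ 2 := by
  rcases s.eq_empty_or_nonempty with rfl | hs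
  · simp
  · simpa [Finset.expect_const hs] using Finset.expect_mul_sq_le_sq_mul_sq s f 1

variable {ι κ : Type*} [Fintype ι] [DecidableEq ι] [Fintype κ]
  {X Y : Type*} [NormedAddCommGroup X] [NormedSpace ℂ X] [NormedAddCommGroup Y] [NormedSpace ℂ Y]

lemma smul_sum_apply_eq_sum_sgn [DecidableEq κ] (R : κ → X →L[ℂ] Y) (v : κ → X) :
    (2 ^ Fintype.card κ : ℂ) • ∑ j, R j (v j) =
      ∑ η : κ → Bool, (∑ i, sgn (η i) • R i) (∑ j, sgn (η j) • v j) := by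
  have diagonal (i j : κ) : ∑ η : κ → Bool, sgn (η i) * sgn (η j) =
      if i = j then 2 ^ Fintype.card κ else 0 := by
    rw [← Fintype.card_smul_expect, expect_sgn_mul_sgn]
    simp
  simp only [sum_apply, smul_apply, map_sum, map_smul]
  rw [Finset.sum_comm, Finset.smul_sum]
  refine Finset.sum_congr rfl fun i _ => ?_
  simp_rw [Finset.smul_sum]
  rw [Finset.sum_comm]
  simp_rw [smul_smul, ← Finset.sum_smul, diagonal]
  simp

lemma norm_sum_apply_sq_le [DecidableEq κ] {R : κ → X →L[ℂ] Y} {b : ℝ}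
    (hR : ∀ η : κ → Bool, ‖∑ j, sgn (η j) • R j‖ ≤ b) (v : κ → X) :
    ‖∑ j, R j (v j)‖ ^ 2 ≤ b ^ 2 * radSq v := by
  have average : ‖∑ j, R j (v j)‖ ≤ 𝔼 η : κ → Bool, b * ‖∑ j, sgn (η j) • v j‖ := by
    have h := congrArg norm (smul_sum_apply_eq_sum_sgn R v)
    rw [norm_smul, norm_pow, Complex.norm_ofNat] at h
    rw [Fintype.expect_eq_sum_div_card, le_div_iff₀' (by simp)]
    simp only [Fintype.card_fun, Fintype.card_bool, Nat.cast_pow, Nat.cast_ofNat, h]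
    exact norm_sum_le_of_le _ fun η _ => (ContinuousLinearMap.le_opNorm _ _).trans
      (mul_le_mul_of_nonneg_right (hR η) (norm_nonneg _))
  calc ‖∑ j, R j (v j)‖ ^ 2
      ≤ (𝔼 η : κ → Bool, b * ‖∑ j, sgn (η j) • v j‖) ^ 2 :=
        pow_le_pow_left₀ (norm_nonneg _) average 2
    _ ≤ 𝔼 η : κ → Bool, (b * ‖∑ j, sgn (η j) • v j‖) ^ 2 := expect_sq_le_expect_sq _ _
    _ = b ^ 2 * radSq v := by simp_rw [mul_pow, ← Finset.mul_expect, radSq]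

lemma radSq_apply_le [DecidableEq κ] {S : κ → X →L[ℂ] Y} {c : ℝ}
    (hS : ∀ η : κ → Bool, ‖∑ j, sgn (η j) • S j‖ ≤ c) (y : X) :
    radSq (fun j => S j y) ≤ c ^ 2 * ‖y‖ ^ 2 := by
  refine Finset.expect_le Finset.univ_nonempty fun η _ => ?_
  rw [← mul_pow]
  refine pow_le_pow_left₀ (norm_nonneg _) ?_ 2
  simpa [sum_apply] using (ContinuousLinearMap.le_opNorm (∑ j, sgn (η j) • S j) y).trans
    (mul_le_mul_of_nonneg_right (hS η) (norm_nonneg y))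

lemma PropAlphaWith.radSq_sum_smul_apply_le {α : ℝ} (hα : PropAlphaWith X α)
    {R S : κ → X →L[ℂ] X} {b c : ℝ} (hR : ∀ η : κ → Bool, ‖∑ j, sgn (η j) • R j‖ ≤ b)
    (hS : ∀ η : κ → Bool, ‖∑ j, sgn (η j) • S j‖ ≤ c) {t : ι → κ → ℂ} (ht : ∀ k j, ‖t k j‖ ≤ 1)
    (x : ι → X) :
    radSq (fun k => ∑ j, t k j • R j (S j (x k))) ≤ (b * c * α) ^ 2 * radSq x := by
  classical
  have collect (ε : ι → Bool) : ∑ k, sgn (ε k) • ∑ j, t k j • R j (S j (x k)) =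
      ∑ j, R j (∑ k, sgn (ε k) • t k j • S j (x k)) := by
    simp_rw [Finset.smul_sum, map_sum, map_smul]
    exact Finset.sum_comm
  calc radSq (fun k => ∑ j, t k j • R j (S j (x k)))
      ≤ 𝔼 ε : ι → Bool, b ^ 2 * radSq (fun j => ∑ k, sgn (ε k) • t k j • S j (x k)) :=
        Finset.expect_le_expect fun ε _ => by
          rw [collect]
          exact norm_sum_apply_sq_le hR _
    _ ≤ b ^ 2 * (α ^ 2 * 𝔼 ε : ι → Bool, radSq (fun j => ∑ k, sgn (ε k) • S j (x k))) := by
        rw [← Finset.mul_expect]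
        exact mul_le_mul_of_nonneg_left
          (hα.expect_radSq_le (fun k j => S j (x k)) ht) (sq_nonneg b)
    _ ≤ b ^ 2 * (α ^ 2 * 𝔼 ε : ι → Bool, c ^ 2 * ‖∑ k, sgn (ε k) • x k‖ ^ 2) := by
        gcongr with ε
        simpa using radSq_apply_le hS (∑ k, sgn (ε k) • x k)
    _ = (b * c * α) ^ 2 * radSq x := by
        rw [← Finset.mul_expect, ← radSq]
        ring

end SumsOfMultipliers

section SquarePartition

open Metric

variable {K E : Type*} [PseudoMetricSpace K] [NormedAddCommGroup E]
  [NormedSpace ℝ E] [FiniteDimensional ℝ E]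

lemma exists_finset_isSeparated_isCover [CompactSpace K] {δ : NNReal} (hδ : 0 < δ) :
    ∃ s : Finset K, IsSeparated δ (s : Set K) ∧ IsCover δ Set.univ (s : Set K) := by
  obtain ⟨N, -, hN, hcover⟩ :=
    exists_finite_isCover_of_isCompact (half_pos hδ).ne' (isCompact_univ (X := K))
  have hpacking : packingNumber δ (Set.univ : Set K) ≠ ⊤ := by
    have h := packingNumber_two_mul_le_externalCoveringNumber (δ / 2) (Set.univ : Set K)
    rw [mul_div_cancel₀ _ two_ne_zero] at h
    exact ((h.trans hcover.externalCoveringNumber_le_encard).trans_lt hN.encard_lt_top).ne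
  have hfin : (maximalSeparatedSet δ (Set.univ : Set K)).Finite :=
    Set.encard_ne_top_iff.mp (encard_maximalSeparatedSet hpacking ▸ hpacking)
  refine ⟨hfin.toFinset, ?_, ?_⟩ <;> rw [hfin.coe_toFinset]
  exacts [isSeparated_maximalSeparatedSet, isCover_maximalSeparatedSet hpacking]

lemma card_filter_dist_lt_le {e : K → E} (he : Isometry e) {δ : NNReal} (hδ : 0 < δ)
    {s : Finset K} (hs : IsSeparated δ (s : Set K)) (z : K) :
    (s.filter (dist z · < 2 * δ)).card ≤ 5 ^ Module.finrank ℝ E := by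
  classical
  let g : K → E := fun p => (δ : ℝ)⁻¹ • (e p - e z)
  have hδ' : (0 : ℝ) < δ := hδ
  have norm_g_sub (p q : K) : ‖g p - g q‖ = (δ : ℝ)⁻¹ * dist p q := by
    rw [← smul_sub, sub_sub_sub_cancel_right, norm_smul, ← dist_eq_norm, he.dist_eq]
    simp
  have separated {p q : K} (hp : p ∈ s) (hq : q ∈ s) (hpq : p ≠ q) : 1 < ‖g p - g q‖ := by
    rw [norm_g_sub, ← div_eq_inv_mul, one_lt_div hδ']
    have h : (δ : ENNReal) < edist p q := hs hp hq hpq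
    rw [edist_nndist] at h
    exact_mod_cast h
  have injOn : Set.InjOn g (s.filter (dist z · < 2 * δ)) := fun p hp q hq hpq => by
    by_contra hne
    have h := separated (Finset.mem_filter.mp hp).1 (Finset.mem_filter.mp hq).1 hne
    rw [hpq, sub_self, norm_zero] at h
    exact absurd h (by norm_num)
  rw [← Finset.card_image_of_injOn injOn]
  refine Besicovitch.card_le_of_separated _ ?_ ?_
  · simp only [Finset.forall_mem_image, Finset.mem_filter, and_imp]
    intro p _ hp
    have h := norm_g_sub p z
    simp only [g, sub_self, smul_zero, sub_zero] at h
    rw [h, inv_mul_le_iff₀ hδ', dist_comm, mul_comm]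
    exact hp.le
  · simp only [Finset.forall_mem_image, Finset.mem_filter, and_imp]
    exact fun p hp _ q hq _ hne => (separated hp hq (ne_of_apply_ne g hne)).le

lemma exists_sq_partition_of_isCover {δ : NNReal} (hδ : 0 < δ) {s : Finset K}
    (hs : IsCover δ Set.univ (s : Set K)) :
    ∃ ψ : s → C(K, ℝ), (∀ p z, 0 ≤ ψ p z) ∧ (∀ p z, ψ p z ≠ 0 → dist z p < 2 * δ) ∧
      ∀ z, ∑ p, ψ p z ^ 2 = 1 := by
  let φ (p : s) (z : K) : ℝ := max 0 (2 * δ - dist z p)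
  have φ_nonneg (p : s) (z : K) : 0 ≤ φ p z := le_max_left _ _
  have sum_φ_pos (z : K) : 0 < ∑ p, φ p z := by
    obtain ⟨p, hp, hzp⟩ := hs (Set.mem_univ z)
    have hzp' : dist z p ≤ δ := by
      change edist z p ≤ δ at hzp
      rw [edist_nndist] at hzp
      exact_mod_cast hzp
    have : (0 : ℝ) < δ := hδ
    exact Finset.sum_pos' (fun p _ => φ_nonneg p z)
      ⟨⟨p, hp⟩, Finset.mem_univ _, lt_max_of_lt_right (by linarith)⟩
  let ψ (p : s) : C(K, ℝ) := ⟨fun z => √(φ p z / ∑ q, φ q z), by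
    have (p : s) : Continuous (φ p) := by fun_prop
    exact Real.continuous_sqrt.comp
      ((this p).div (continuous_finsetSum _ fun q _ => this q) fun z => (sum_φ_pos z).ne')⟩
  refine ⟨ψ, fun p z => Real.sqrt_nonneg _, fun p z h => ?_, fun z => ?_⟩
  · contrapose! h
    simp [ψ, φ, h]
  · simp only [ψ, ContinuousMap.coe_mk]
    simp_rw [Real.sq_sqrt (div_nonneg (φ_nonneg _ z) (sum_φ_pos z).le), ← Finset.sum_div]
    exact div_self (sum_φ_pos z).ne'

variable [CompactSpace K]

/-- The overlap bound holds because the bumps are centred at a `δ`-separated set, of which at most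
`5 ^ dim E` points lie in a ball of radius `2δ`. -/
lemma exists_sq_partition {e : K → E} (he : Isometry e) {δ : NNReal} (hδ : 0 < δ) :
    ∃ (s : Finset K) (ψ : s → C(K, ℝ)), (∀ p z, 0 ≤ ψ p z) ∧
      (∀ p z, ψ p z ≠ 0 → dist z p < 2 * δ) ∧ (∀ z, ∑ p, ψ p z ^ 2 = 1) ∧
      ∀ z, ∑ p, ψ p z ≤ 5 ^ Module.finrank ℝ E := by
  obtain ⟨s, hs, hcover⟩ := exists_finset_isSeparated_isCover (K := K) hδ
  obtain ⟨ψ, ψ_nonneg, support, sum_sq⟩ := exists_sq_partition_of_isCover hδ hcover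
  refine ⟨s, ψ, ψ_nonneg, support, sum_sq, fun z => ?_⟩
  have le_one (p : s) : ψ p z ≤ 1 := by
    refine (sq_le_one_iff₀ (ψ_nonneg p z)).mp ?_
    rw [← sum_sq z]
    exact Finset.single_le_sum (f := fun p => ψ p z ^ 2) (fun p _ => sq_nonneg _)
      (Finset.mem_univ p)
  calc ∑ p, ψ p z
      ≤ ∑ p : s, if dist z p < 2 * δ then (1 : ℝ) else 0 := by
        refine Finset.sum_le_sum fun p _ => ?_
        split_ifs with h
        exacts [le_one p, (not_imp_comm.mp (support p z) h).le]
    _ = (s.filter (dist z · < 2 * δ)).card := by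
        rw [Finset.sum_coe_sort s fun p => if dist z p < 2 * δ then (1 : ℝ) else 0]
        simp
    _ ≤ 5 ^ Module.finrank ℝ E := mod_cast card_filter_dist_lt_le he hδ hs z

lemma exists_sq_partition_approx {e : K → E} (he : Isometry e) {ι : Type*} [Finite ι]
    (f : ι → C(K, ℂ)) {ε : ℝ} (hε : 0 < ε) :
    ∃ (s : Finset K) (ψ : s → C(K, ℂ)),
      (∀ η : s → Bool, ‖∑ p, sgn (η p) • ψ p‖ ≤ 5 ^ Module.finrank ℝ E) ∧
      ∀ k, dist (f k) (∑ p : s, f k p • (ψ p * ψ p)) ≤ ε := by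
  cases nonempty_fintype ι
  obtain ⟨δ, hδ, hfδ⟩ := Metric.uniformContinuous_iff.mp
    (CompactSpace.uniformContinuous_of_continuous (f := fun z k => f k z) (by fun_prop)) ε hε
  obtain ⟨s, ψ, ψ_nonneg, support, sum_sq, sum_le⟩ :=
    exists_sq_partition he (δ := (δ / 2).toNNReal) (by positivity)
  rw [Real.coe_toNNReal _ (by positivity), mul_div_cancel₀ _ two_ne_zero] at support
  refine ⟨s, fun p => ⟨fun z => (ψ p z : ℂ), by fun_prop⟩, fun η => ?_, fun k => ?_⟩
  · refine (ContinuousMap.norm_le _ (by positivity)).mpr fun z => ?_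
    rw [ContinuousMap.sum_apply]
    refine (norm_sum_le _ _).trans (le_of_eq_of_le ?_ (sum_le z))
    exact Finset.sum_congr rfl fun p _ => by simp [norm_sgn, abs_of_nonneg (ψ_nonneg p z)]
  · refine (ContinuousMap.dist_le hε.le).mpr fun z => ?_
    have mem_ball (p : s) (hp : ψ p z ^ 2 ≠ 0) : f k p ∈ Metric.closedBall (f k z) ε :=
      (dist_le_pi_dist _ _ k).trans
        (hfδ (dist_comm z p ▸ support p z (pow_ne_zero_iff two_ne_zero |>.mp hp))).le
    have h := (convex_closedBall (f k z) ε).finsum_mem (fun p => sq_nonneg (ψ p z))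
      (by rw [finsum_eq_sum_of_fintype, sum_sq]) mem_ball
    rw [finsum_eq_sum_of_fintype, Metric.mem_closedBall'] at h
    convert h using 2
    rw [ContinuousMap.sum_apply]
    exact Finset.sum_congr rfl fun p _ => by simp [sq, mul_comm]

end SquarePartition

section Calculus

variable {K E : Type*} [PseudoMetricSpace K] [CompactSpace K] [NormedAddCommGroup E]
  [NormedSpace ℝ E] [FiniteDimensional ℝ E]
  {X : Type*} [NormedAddCommGroup X] [NormedSpace ℂ X]

lemma PropAlphaWith.radSq_map_apply_le {α : ℝ} (hα : PropAlphaWith X α) {e : K → E}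
    (he : Isometry e) (w : C(K, ℂ) →ₐ[ℂ] (X →L[ℂ] X)) {M : ℝ} (hM : 0 ≤ M)
    (hw : ∀ f, ‖w f‖ ≤ M * ‖f‖) {ι : Type*} [Fintype ι] [DecidableEq ι] {f : ι → C(K, ℂ)}
    (hf : ∀ k, ‖f k‖ ≤ 1) (x : ι → X) :
    radSq (fun k => w (f k) (x k)) ≤
      ((M * 5 ^ Module.finrank ℝ E) * (M * 5 ^ Module.finrank ℝ E) * α) ^ 2 * radSq x := by
  have hw_cont : Continuous w := AddMonoidHomClass.continuous_of_bound w M hw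
  have closed : IsClosed {g : ι → C(K, ℂ) | radSq (fun k => w (g k) (x k)) ≤
      ((M * 5 ^ Module.finrank ℝ E) * (M * 5 ^ Module.finrank ℝ E) * α) ^ 2 * radSq x} := by
    refine isClosed_le ?_ continuous_const
    simp only [radSq, Fintype.expect_eq_sum_div_card]
    fun_prop
  refine closed.closure_subset (Metric.mem_closure_iff.mpr fun ε hε => ?_)
  obtain ⟨s, ψ, hψ, happrox⟩ := exists_sq_partition_approx he f (half_pos hε)
  refine ⟨fun k => ∑ p : s, f k p • (ψ p * ψ p), ?_,
    ((dist_pi_le_iff (half_pos hε).le).mpr happrox).trans_lt (half_lt_self hε)⟩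
  have norm_sum_map (η : s → Bool) : ‖∑ p, sgn (η p) • w (ψ p)‖ ≤ M * 5 ^ Module.finrank ℝ E := by
    simp_rw [← map_smul, ← map_sum]
    exact (hw _).trans (mul_le_mul_of_nonneg_left (hψ η) hM)
  simpa using hα.radSq_sum_smul_apply_le norm_sum_map norm_sum_map
    (t := fun k p => f k p) (fun k p => ((f k).norm_coe_le_norm _).trans (hf k)) x

theorem PropAlphaWith.rBdd_map_unitBall {α : ℝ} (hα : PropAlphaWith X α) {e : K → E}
    (he : Isometry e) (w : C(K, ℂ) →ₐ[ℂ] (X →L[ℂ] X)) {M : ℝ} (hw : ∀ f, ‖w f‖ ≤ M * ‖f‖) :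
    RBdd (w '' Metric.closedBall 0 1) := by
  have hw' (f : C(K, ℂ)) : ‖w f‖ ≤ |M| * ‖f‖ :=
    (hw f).trans (mul_le_mul_of_nonneg_right (le_abs_self M) (norm_nonneg f))
  refine ⟨_, abs_nonneg ((|M| * 5 ^ Module.finrank ℝ E) * (|M| * 5 ^ Module.finrank ℝ E) * α),
    RBddWith.of_radSq_le (abs_nonneg _) fun n T x hT => ?_⟩
  choose f hf hfT using hT
  simp_rw [← hfT, sq_abs]
  exact hα.radSq_map_apply_le he w (abs_nonneg M) hw' (fun k => by simpa using hf k) x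

end Calculus

section RademacherWalk

open MeasureTheory ProbabilityTheory Filter Topology

lemma sgn_beq (a b : Bool) : sgn (a == b) = sgn a * sgn b := by
  cases a <;> cases b <;> simp [sgn]

lemma ofReal_sgn_re (b : Bool) : (((sgn b).re : ℝ) : ℂ) = sgn b := by
  cases b <;> simp [sgn]

lemma integral_uniformOfFintype {𝕜 Ω : Type*} [RCLike 𝕜] [Fintype Ω] [Nonempty Ω]
    [MeasurableSpace Ω] [MeasurableSingletonClass Ω] (f : Ω → 𝕜) :
    ∫ ω, f ω ∂(PMF.uniformOfFintype Ω).toMeasure = 𝔼 ω, f ω := by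
  rw [PMF.integral_eq_sum, Fintype.expect_eq_sum_div_card]
  simp [div_eq_inv_mul, Finset.mul_sum, RCLike.real_smul_eq_coe_mul]

lemma expect_bool {𝕜 : Type*} [Field 𝕜] [CharZero 𝕜] (f : Bool → 𝕜) :
    𝔼 b, f b = (f true + f false) / 2 := by
  rw [Fintype.expect_eq_sum_div_card, Fintype.sum_bool, Fintype.card_bool, Nat.cast_ofNat]

lemma expect_exp_sgn_mul_I (s : ℝ) :
    𝔼 b : Bool, Complex.exp ((sgn b).re * s * Complex.I) = Complex.cos s := by
  rw [expect_bool]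
  simp [sgn, Complex.cos]

lemma tendsto_cos_inv_sqrt_mul_pow (s : ℝ) :
    Tendsto (fun n : ℕ => Complex.cos (((√n)⁻¹ * s : ℝ) : ℂ) ^ n) atTop
      (𝓝 (Complex.exp (-(s : ℂ) ^ 2 / 2))) := by
  have hmeas : Measurable fun b : Bool => (sgn b).re := measurable_of_finite _
  have hchar (t : ℝ) : charFun ((PMF.uniformOfFintype Bool).toMeasure.map fun b => (sgn b).re) t =
      Complex.cos t := by
    rw [charFun_apply_real, integral_map hmeas.aemeasurable (by fun_prop),
      integral_uniformOfFintype, ← expect_exp_sgn_mul_I]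
    simp_rw [mul_comm (t : ℂ)]
  simp_rw [← hchar]
  refine tendsto_charFun_inv_sqrt_mul_pow hmeas.aemeasurable ?_ ?_ s <;>
  rw [integral_uniformOfFintype, expect_bool] <;> simp [sgn]

variable {ι : Type*} [Fintype ι] [DecidableEq ι]

/-- The position `n^{-1/2} ∑ᵢ tᵢ` after `n` rescaled steps `tᵢ ∈ {±1}^ι`. -/
def walkPosition {n : ℕ} (t : Fin n → ι → Bool) : EuclideanSpace ℝ ι :=
  WithLp.toLp 2 fun j => (√n)⁻¹ * ∑ i, (sgn (t i j)).re

/-- The law of the rescaled `n`-step random walk on `{±1}^ι`, which tends to the standard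
Gaussian. -/
def walkLaw (ι : Type*) [Fintype ι] [DecidableEq ι] (n : ℕ) :
    ProbabilityMeasure (EuclideanSpace ℝ ι) :=
  ⟨(PMF.uniformOfFintype (Fin n → ι → Bool)).toMeasure.map walkPosition,
    Measure.isProbabilityMeasure_map (measurable_of_finite _).aemeasurable⟩

lemma integral_walkLaw {𝕜 : Type*} [RCLike 𝕜] (n : ℕ) {f : EuclideanSpace ℝ ι → 𝕜}
    (hf : Continuous f) :
    ∫ v, f v ∂(walkLaw ι n : Measure _) = 𝔼 t : Fin n → ι → Bool, f (walkPosition t) := by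
  rw [← integral_uniformOfFintype]
  exact integral_map (measurable_of_finite _).aemeasurable hf.aestronglyMeasurable

lemma integrable_walkLaw (n : ℕ) {f : EuclideanSpace ℝ ι → ℝ} (hf : Continuous f) :
    Integrable f (walkLaw ι n : Measure _) :=
  (integrable_map_measure hf.aestronglyMeasurable (measurable_of_finite _).aemeasurable).mpr
    .of_finite

lemma expect_prod_apply {𝕜 κ Ω : Type*} [Field 𝕜] [CharZero 𝕜] [Fintype κ] [DecidableEq κ]
    [Fintype Ω] (f : κ → Ω → 𝕜) :
    𝔼 ω : κ → Ω, ∏ k, f k (ω k) = ∏ k, 𝔼 a, f k a := by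
  simp_rw [Fintype.expect_eq_sum_div_card, Finset.prod_div_distrib, Finset.prod_univ_sum,
    Fintype.piFinset_univ]
  simp

lemma charFun_walkLaw (n : ℕ) (s : EuclideanSpace ℝ ι) :
    charFun (walkLaw ι n : Measure _) s = ∏ j, Complex.cos (((√n)⁻¹ * s j : ℝ) : ℂ) ^ n := by
  rw [charFun_apply, integral_walkLaw n (by fun_prop)]
  have split (t : Fin n → ι → Bool) :
      Complex.exp ((inner ℝ (walkPosition t) s : ℝ) * Complex.I) =
        ∏ i, ∏ j, Complex.exp ((sgn (t i j)).re * ((√n)⁻¹ * s j : ℝ) * Complex.I) := by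
    simp_rw [← Complex.exp_sum, ← Finset.sum_mul]
    rw [Finset.sum_comm]
    simp [walkPosition, PiLp.inner_apply, Finset.mul_sum, mul_comm, mul_assoc]
  simp_rw [split]
  rw [expect_prod_apply fun (_ : Fin n) (a : ι → Bool) =>
    ∏ j, Complex.exp ((sgn (a j)).re * ((√n)⁻¹ * s j : ℝ) * Complex.I)]
  simp_rw [expect_prod_apply fun j b =>
    Complex.exp ((sgn b).re * ((√n)⁻¹ * s j : ℝ) * Complex.I), expect_exp_sgn_mul_I]
  simp [Finset.prod_pow]

lemma tendsto_walkLaw :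
    Tendsto (walkLaw ι) atTop
      (𝓝 ⟨stdGaussian (EuclideanSpace ℝ ι), inferInstance⟩) := by
  refine ProbabilityMeasure.tendsto_of_tendsto_charFun fun s => ?_
  have hexp : charFun (stdGaussian (EuclideanSpace ℝ ι)) s =
      ∏ j, Complex.exp (-(s j : ℂ) ^ 2 / 2) := by
    rw [charFun_stdGaussian, ← Complex.exp_sum, ← Complex.ofReal_pow,
      EuclideanSpace.real_norm_sq_eq, ← Finset.sum_div, Finset.sum_neg_distrib]
    push_cast
    rfl
  simp_rw [charFun_walkLaw]
  rw [ProbabilityMeasure.coe_mk, hexp]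
  exact tendsto_finsetProd _ fun j _ => tendsto_cos_inv_sqrt_mul_pow (s j)

end RademacherWalk

section GaussianUpperBound

open MeasureTheory ProbabilityTheory Filter Topology

lemma integral_le_of_tendsto_of_forall_integral_le {Ω : Type*} [TopologicalSpace Ω]
    [MeasurableSpace Ω] [OpensMeasurableSpace Ω] [HasOuterApproxClosed Ω]
    {μs : ℕ → ProbabilityMeasure Ω} {μ : ProbabilityMeasure Ω} (hμ : Tendsto μs atTop (𝓝 μ))
    {f : Ω → ℝ} (hf : Continuous f) (hf0 : 0 ≤ f) {C : ℝ}
    (hint : ∀ n, Integrable f (μs n : Measure Ω)) (hC : ∀ n, ∫ ω, f ω ∂(μs n : Measure Ω) ≤ C) :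
    ∫ ω, f ω ∂(μ : Measure Ω) ≤ C := by
  have hC0 : 0 ≤ C := (integral_nonneg hf0).trans (hC 0)
  rw [integral_eq_lintegral_of_nonneg_ae (ae_of_all _ hf0) hf.aestronglyMeasurable]
  refine ENNReal.toReal_le_of_le_ofReal hC0 ?_
  refine (lintegral_le_liminf_lintegral_of_forall_isOpen_measure_le_liminf_measure hf hf0
    fun G hG => ProbabilityMeasure.le_liminf_measure_open_of_tendsto hμ hG).trans ?_
  refine liminf_le_of_le (by isBoundedDefault) fun b hb => ?_
  obtain ⟨n, hn⟩ := hb.exists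
  refine hn.trans ?_
  rw [← ofReal_integral_eq_lintegral_ofReal (hint n) (ae_of_all _ hf0)]
  exact ENNReal.ofReal_le_ofReal (hC n)

variable {ι : Type*} [Fintype ι] {X : Type*} [NormedAddCommGroup X] [NormedSpace ℂ X]

/-- The squared Gaussian norm `𝔼 ‖∑ⱼ gⱼ xⱼ‖²` of a finite family `x`, the `gⱼ` being independent
real standard Gaussians. It replaces the Rademacher norm where rotation invariance is needed. -/
def gaussSq (x : ι → X) : ℝ :=
  ∫ v, ‖∑ j, v j • x j‖ ^ 2 ∂stdGaussian (EuclideanSpace ℝ ι)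

lemma norm_sum_walkPosition_smul_sq (x : ι → X) {n : ℕ} (t : Fin n → ι → Bool) :
    ‖∑ j, walkPosition t j • x j‖ ^ 2 = (n : ℝ)⁻¹ * ‖∑ i, ∑ j, sgn (t i j) • x j‖ ^ 2 := by
  have hsum : ∑ j, walkPosition t j • x j = (√n)⁻¹ • ∑ i, ∑ j, sgn (t i j) • x j := by
    rw [Finset.sum_comm, Finset.smul_sum]
    refine Finset.sum_congr rfl fun j _ => ?_
    simp_rw [walkPosition, mul_smul, Finset.sum_smul, ← Complex.coe_smul, ofReal_sgn_re]
  rw [hsum, norm_smul, mul_pow, norm_inv, inv_pow, Real.norm_of_nonneg (Real.sqrt_nonneg _),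
    Real.sq_sqrt n.cast_nonneg]

variable [DecidableEq ι]

lemma PropAlphaWith.expect_norm_sum_sum_sgn_sq_le {α : ℝ} (hα : PropAlphaWith X α) (x : ι → X)
    (n : ℕ) :
    𝔼 t : Fin n → ι → Bool, ‖∑ i, ∑ j, sgn (t i j) • x j‖ ^ 2 ≤ n * (α ^ 2 * radSq x) := by
  have twist (ε : Fin n → Bool) (η : ι → Bool) :
      𝔼 t : Fin n → ι → Bool, ‖∑ j, sgn (η j) • ∑ i, sgn (ε i) • sgn (t i j) • x j‖ ^ 2 =
        𝔼 t : Fin n → ι → Bool, ‖∑ i, ∑ j, sgn (t i j) • x j‖ ^ 2 := by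
    let e : (Fin n → ι → Bool) → Fin n → ι → Bool := fun t i j => (η j == ε i) == t i j
    have he : Function.Involutive e := fun t => by funext i j; simp [e]
    refine Fintype.expect_equiv he.toPerm _ _ fun t => ?_
    simp only [Function.Involutive.coe_toPerm, e, sgn_beq, Finset.smul_sum, smul_smul, mul_assoc]
    rw [Finset.sum_comm]
  calc 𝔼 t : Fin n → ι → Bool, ‖∑ i, ∑ j, sgn (t i j) • x j‖ ^ 2
      = 𝔼 t : Fin n → ι → Bool, 𝔼 ε : Fin n → Bool,
          radSq (fun j => ∑ i, sgn (ε i) • sgn (t i j) • x j) := by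
        simp only [radSq]
        rw [Finset.expect_comm]
        simp_rw [Finset.expect_comm (s := (Finset.univ : Finset (Fin n → ι → Bool))), twist]
        simp
    _ ≤ 𝔼 _t : Fin n → ι → Bool, α ^ 2 * 𝔼 ε : Fin n → Bool,
          radSq (fun j => ∑ i, sgn (ε i) • x j) :=
        Finset.expect_le_expect fun t _ =>
          hα.expect_radSq_le (fun _ j => x j) fun i j => (norm_sgn _).le
    _ = n * (α ^ 2 * radSq x) := by
        simp_rw [← Finset.sum_smul, radSq_const_smul, ← Finset.expect_mul]
        have hsq := expect_norm_sum_sgn_mul_sq fun _ : Fin n => (1 : ℂ)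
        simp only [mul_one, norm_one, one_pow, Finset.sum_const, Finset.card_univ,
          Fintype.card_fin, nsmul_eq_mul] at hsq
        rw [hsq, Finset.expect_const Finset.univ_nonempty]
        ring

lemma PropAlphaWith.gaussSq_le {α : ℝ} (hα : PropAlphaWith X α) (x : ι → X) :
    gaussSq x ≤ α ^ 2 * radSq x := by
  have hcont : Continuous fun v : EuclideanSpace ℝ ι => ‖∑ j, v j • x j‖ ^ 2 := by fun_prop
  refine integral_le_of_tendsto_of_forall_integral_le tendsto_walkLaw hcont
    (fun v => by positivity) (fun n => integrable_walkLaw n hcont) fun n => ?_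
  simp_rw [integral_walkLaw n hcont, norm_sum_walkPosition_smul_sq, ← Finset.mul_expect]
  refine inv_mul_le_of_le_mul₀ n.cast_nonneg ?_ (hα.expect_norm_sum_sum_sgn_sq_le x n)
  exact mul_nonneg (sq_nonneg α) (radSq_nonneg x)

end GaussianUpperBound

section GaussianLowerBound

open MeasureTheory ProbabilityTheory

lemma norm_integral_sq_le {Ω E : Type*} [MeasurableSpace Ω] {P : Measure Ω}
    [IsProbabilityMeasure P] [NormedAddCommGroup E] [NormedSpace ℝ E] [CompleteSpace E] {f : Ω → E}
    (hf : MemLp f 2 P) : ‖∫ ω, f ω ∂P‖ ^ 2 ≤ ∫ ω, ‖f ω‖ ^ 2 ∂P :=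
  (convexOn_univ_norm.pow (fun _ _ => norm_nonneg _) 2).map_integral_le
    (by fun_prop) isClosed_univ (ae_of_all _ fun _ => Set.mem_univ _)
    (hf.integrable one_le_two) (hf.integrable_norm_pow two_ne_zero)

variable {ι : Type*} [Fintype ι]

/-- The first absolute moment of a standard Gaussian. -/
def gaussAbsMoment : ℝ := ∫ t, |t| ∂gaussianReal 0 1

lemma gaussAbsMoment_pos : 0 < gaussAbsMoment := by
  have := nullSingletonClass_gaussianReal (μ := 0) one_ne_zero
  have hsupp : Function.support (fun t : ℝ => |t|) = {0}ᶜ := by ext t; simp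
  rw [gaussAbsMoment, integral_pos_iff_support_of_nonneg (fun t => abs_nonneg t)
    IsGaussian.integrable_id.abs, hsupp, prob_compl_eq_one_sub (measurableSet_singleton _)]
  simp

lemma integral_abs_apply_stdGaussian (j : ι) :
    ∫ v, |v j| ∂stdGaussian (EuclideanSpace ℝ ι) = gaussAbsMoment := by
  classical
  have hj := measurePreserving_eval_multivariateGaussian (μ := (0 : EuclideanSpace ℝ ι))
    Matrix.PosSemidef.one (i := j)
  simp only [multivariateGaussian_zero_one, PiLp.zero_apply, Matrix.one_apply_eq,
    Real.toNNReal_one] at hj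
  rw [gaussAbsMoment, ← hj.map_eq, integral_map hj.measurable.aemeasurable (by fun_prop)]

lemma memLp_apply_of_isGaussian {ι : Type*} [Finite ι] (μ : Measure (EuclideanSpace ℝ ι))
    [IsGaussian μ] (j : ι) : MemLp (fun v => v j) 2 μ := by
  cases nonempty_fintype ι
  exact (EuclideanSpace.proj j : EuclideanSpace ℝ ι →L[ℝ] ℝ).comp_memLp' IsGaussian.memLp_two_id

variable {X : Type*} [NormedAddCommGroup X] [NormedSpace ℂ X]

lemma radSq_integral_le [DecidableEq ι] [CompleteSpace X] {Ω : Type*} [MeasurableSpace Ω]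
    {P : Measure Ω} [IsProbabilityMeasure P] {f : ι → Ω → X} (hf : ∀ j, MemLp (f j) 2 P) :
    radSq (fun j => ∫ ω, f j ω ∂P) ≤ ∫ ω, radSq (fun j => f j ω) ∂P := by
  have hsum (ε : ι → Bool) : MemLp (fun ω => ∑ j, sgn (ε j) • f j ω) 2 P :=
    memLp_finsetSum _ fun j _ => (hf j).const_smul (sgn (ε j))
  simp only [radSq, Fintype.expect_eq_sum_div_card]
  rw [integral_div, integral_finsetSum _ fun ε _ => (hsum ε).integrable_norm_pow two_ne_zero]
  gcongr with ε
  refine le_of_eq_of_le ?_ (norm_integral_sq_le (hsum ε))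
  simp_rw [← integral_smul]
  exact congrArg (‖·‖ ^ 2) (integral_finsetSum _ fun j _ =>
    ((hf j).const_smul (sgn (ε j))).integrable one_le_two).symm

lemma radSq_abs_smul [DecidableEq ι] (c : ι → ℝ) (x : ι → X) :
    radSq (fun j => |c j| • x j) = radSq (fun j => c j • x j) := by
  let e : (ι → Bool) → ι → Bool := fun ε j => ε j == decide (0 ≤ c j)
  have he : Function.Involutive e := fun ε => by funext j; simp [e]
  refine Fintype.expect_equiv he.toPerm _ _ fun ε => ?_
  congr 2
  refine Finset.sum_congr rfl fun j _ => ?_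
  by_cases hc : 0 ≤ c j
  · simp [e, hc, abs_of_nonneg]
  · simp [e, hc, abs_of_neg (not_le.mp hc), sgn_not]

/-- The reflection of `EuclideanSpace ℝ ι` changing the signs of the coordinates according
to `ε`. -/
def signFlip (ε : ι → Bool) : EuclideanSpace ℝ ι ≃ₗᵢ[ℝ] EuclideanSpace ℝ ι :=
  LinearIsometryEquiv.piLpCongrRight 2 fun j =>
    if ε j then LinearIsometryEquiv.refl ℝ ℝ else LinearIsometryEquiv.neg ℝ

lemma signFlip_apply_smul (ε : ι → Bool) (v : EuclideanSpace ℝ ι) (j : ι) (y : X) :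
    signFlip ε v j • y = sgn (ε j) • v j • y := by
  cases h : ε j <;> simp [signFlip, sgn, h]

lemma gaussSq_sgn_smul (ε : ι → Bool) (x : ι → X) :
    gaussSq (fun j => sgn (ε j) • x j) = gaussSq x := by
  have hcont : Continuous fun v : EuclideanSpace ℝ ι => ‖∑ j, v j • x j‖ ^ 2 := by fun_prop
  rw [gaussSq, gaussSq, ← stdGaussian_map (signFlip ε), integral_map
    (signFlip ε).continuous.measurable.aemeasurable hcont.aestronglyMeasurable, stdGaussian_map]
  simp_rw [signFlip_apply_smul, smul_comm (sgn _)]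

lemma memLp_sum_smul_of_isGaussian (μ : Measure (EuclideanSpace ℝ ι)) [IsGaussian μ] (x : ι → X) :
    MemLp (fun v => ∑ j, v j • x j) 2 μ :=
  memLp_finsetSum _ fun j _ =>
    ((ContinuousLinearMap.id ℝ ℝ).smulRight (x j)).comp_memLp' (memLp_apply_of_isGaussian μ j)

lemma gaussSq_eq_integral_radSq [DecidableEq ι] (x : ι → X) :
    gaussSq x = ∫ v, radSq (fun j => v j • x j) ∂stdGaussian (EuclideanSpace ℝ ι) := by
  have signed (ε : ι → Bool) : ∫ v, ‖∑ j, v j • sgn (ε j) • x j‖ ^ 2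
      ∂stdGaussian (EuclideanSpace ℝ ι) = gaussSq x := gaussSq_sgn_smul ε x
  simp only [radSq, Fintype.expect_eq_sum_div_card, smul_comm (sgn _)]
  rw [integral_div, integral_finsetSum _ fun ε _ =>
    (memLp_sum_smul_of_isGaussian _ _).integrable_norm_pow two_ne_zero]
  simp [signed]

lemma sq_gaussAbsMoment_mul_radSq_le [DecidableEq ι] [CompleteSpace X] (x : ι → X) :
    gaussAbsMoment ^ 2 * radSq x ≤ gaussSq x := by
  have hmemLp (j : ι) :
      MemLp (fun v => |v j| • x j) 2 (stdGaussian (EuclideanSpace ℝ ι)) :=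
    ((ContinuousLinearMap.id ℝ ℝ).smulRight (x j)).comp_memLp' (memLp_apply_of_isGaussian _ j).abs
  calc gaussAbsMoment ^ 2 * radSq x
      = radSq (fun j => ∫ v, |v j| • x j ∂stdGaussian (EuclideanSpace ℝ ι)) := by
        simp_rw [integral_smul_const, integral_abs_apply_stdGaussian, ← Complex.coe_smul,
          radSq_const_smul, Complex.norm_real, Real.norm_eq_abs, sq_abs]
    _ ≤ ∫ v, radSq (fun j => |v j| • x j) ∂stdGaussian (EuclideanSpace ℝ ι) :=
        radSq_integral_le hmemLp
    _ = gaussSq x := by simp_rw [radSq_abs_smul, gaussSq_eq_integral_radSq]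

end GaussianLowerBound

section GaussianContraction

open MeasureTheory ProbabilityTheory
open scoped Matrix Matrix.Norms.L2Operator

lemma charFun_map_continuousLinearMap {E F : Type*} [NormedAddCommGroup E] [InnerProductSpace ℝ E]
    [CompleteSpace E] [MeasurableSpace E] [BorelSpace E] [NormedAddCommGroup F]
    [InnerProductSpace ℝ F] [CompleteSpace F] [MeasurableSpace F] [BorelSpace F]
    [SecondCountableTopology F] (μ : Measure E) (L : E →L[ℝ] F) (t : F) :
    charFun (μ.map L) t = charFun μ (ContinuousLinearMap.adjoint L t) := by
  rw [charFun_apply, charFun_apply, integral_map (by fun_prop) (by fun_prop)]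
  simp_rw [ContinuousLinearMap.adjoint_inner_right]

lemma integral_norm_sq_le_conv {E F : Type*} [NormedAddCommGroup E] [NormedSpace ℝ E]
    [CompleteSpace E] [SecondCountableTopology E] [MeasurableSpace E] [BorelSpace E]
    [NormedAddCommGroup F] [NormedSpace ℝ F] [CompleteSpace F]
    (μ ν : Measure E) [IsGaussian μ] [IsGaussian ν] (hν : ∫ b, b ∂ν = 0) (Φ : E →L[ℝ] F) :
    ∫ a, ‖Φ a‖ ^ 2 ∂μ ≤ ∫ a, ‖Φ a‖ ^ 2 ∂(μ ∗ ν) := by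
  have hint (ρ : Measure E) [IsGaussian ρ] : Integrable (fun a => ‖Φ a‖ ^ 2) ρ :=
    (Φ.comp_memLp' IsGaussian.memLp_two_id).integrable_norm_pow two_ne_zero
  have hprod := ((integrable_conv_iff (by fun_prop)).mp (hint (μ ∗ ν))).2
  rw [integral_conv (hint (μ ∗ ν))]
  refine integral_mono (hint μ) (by simpa using hprod) fun a => ?_
  have hmean : ∫ b, Φ (a + b) ∂ν = Φ a := by
    simp_rw [map_add]
    rw [integral_add (integrable_const _) (Φ.integrable_comp IsGaussian.integrable_fun_id),
      Φ.integral_comp_comm IsGaussian.integrable_fun_id, hν]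
    simp
  rw [← hmean]
  exact norm_integral_sq_le (Φ.comp_memLp' ((memLp_const a).add IsGaussian.memLp_two_id))

variable {ι κ : Type*} [Fintype ι] [Fintype κ]

lemma charFun_map_transpose_stdGaussian [DecidableEq κ] (B : Matrix κ ι ℝ)
    (t : EuclideanSpace ℝ ι) :
    charFun ((stdGaussian (EuclideanSpace ℝ κ)).map
        (Matrix.toEuclideanLin Bᵀ).toContinuousLinearMap) t =
      Complex.exp (-‖WithLp.toLp 2 (B *ᵥ t.ofLp)‖ ^ 2 / 2) := by
  classical
  have hadj : ContinuousLinearMap.adjoint (Matrix.toEuclideanLin Bᵀ).toContinuousLinearMap t =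
      WithLp.toLp 2 (B *ᵥ t.ofLp) := by
    rw [← LinearMap.adjoint_toContinuousLinearMap,
      ← Matrix.conjTranspose_eq_transpose_of_trivial B,
      Matrix.toEuclideanLin_conjTranspose_eq_adjoint, LinearMap.adjoint_adjoint]
    rfl
  rw [charFun_map_continuousLinearMap, hadj, charFun_stdGaussian]

variable [DecidableEq ι]

lemma dotProduct_sq_norm_sub_mulVec (B : Matrix κ ι ℝ) (c : ℝ) (u : EuclideanSpace ℝ ι) :
    u.ofLp ⬝ᵥ ((c ^ 2 • 1 - Bᵀ * B) *ᵥ u.ofLp) =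
      c ^ 2 * ‖u‖ ^ 2 - ‖WithLp.toLp 2 (B *ᵥ u.ofLp)‖ ^ 2 := by
  rw [Matrix.sub_mulVec, dotProduct_sub, Matrix.smul_mulVec, Matrix.one_mulVec, dotProduct_smul,
    ← Matrix.mulVec_mulVec, Matrix.dotProduct_mulVec, Matrix.vecMul_transpose,
    EuclideanSpace.real_norm_sq_eq, EuclideanSpace.real_norm_sq_eq]
  simp [dotProduct, sq]

lemma posSemidef_sq_norm_smul_one_sub (B : Matrix κ ι ℝ) :
    (‖B‖ ^ 2 • 1 - Bᵀ * B).PosSemidef := by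
  refine .of_dotProduct_mulVec_nonneg ?_ fun u => ?_
  · simp [Matrix.IsHermitian, Matrix.conjTranspose_eq_transpose_of_trivial]
  · rw [star_trivial, dotProduct_sq_norm_sub_mulVec B ‖B‖ (WithLp.toLp 2 u), sub_nonneg, ← mul_pow]
    gcongr
    exact Matrix.l2_opNorm_mulVec B (WithLp.toLp 2 u)

lemma l2_opNorm_map_le {A : Matrix κ ι ℂ} (φ : ℂ →L[ℝ] ℝ) (hφ : ‖φ‖ ≤ 1) :
    ‖A.map φ‖ ≤ ‖A‖ := by
  rw [Matrix.l2_opNorm_def]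
  refine ContinuousLinearMap.opNorm_le_bound _ (norm_nonneg A) fun u => ?_
  have h := Matrix.l2_opNorm_mulVec A (WithLp.toLp 2 fun j => (u j : ℂ))
  have hu : ‖(WithLp.toLp 2 fun j => (u j : ℂ) : EuclideanSpace ℂ ι)‖ = ‖u‖ := by
    simp [EuclideanSpace.norm_eq]
  rw [hu] at h
  refine le_trans ?_ h
  rw [EuclideanSpace.norm_eq, EuclideanSpace.norm_eq]
  gcongr with i
  have hi : ((A.map φ) *ᵥ u.ofLp) i = φ ((A *ᵥ fun j => (u j : ℂ)) i) := by
    simp only [Matrix.mulVec, dotProduct, Matrix.map_apply, map_sum]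
    refine Finset.sum_congr rfl fun j _ => ?_
    rw [mul_comm, mul_comm (A i j), ← Complex.real_smul, map_smul, smul_eq_mul]
  change ‖((A.map φ) *ᵥ u.ofLp) i‖ ≤ ‖(A *ᵥ fun j => (u j : ℂ)) i‖
  rw [hi]
  exact (φ.le_of_opNorm_le hφ _).trans_eq (one_mul _)

lemma map_transpose_stdGaussian_conv [DecidableEq κ] (B : Matrix κ ι ℝ) :
    (stdGaussian (EuclideanSpace ℝ κ)).map (Matrix.toEuclideanLin Bᵀ).toContinuousLinearMap ∗
        multivariateGaussian 0 (‖B‖ ^ 2 • 1 - Bᵀ * B) =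
      (stdGaussian (EuclideanSpace ℝ ι)).map (‖B‖ • ·) := by
  refine Measure.ext_of_charFun (funext fun t => ?_)
  rw [charFun_conv, charFun_map_transpose_stdGaussian,
    charFun_multivariateGaussian (posSemidef_sq_norm_smul_one_sub B), charFun_map_smul,
    charFun_stdGaussian, dotProduct_sq_norm_sub_mulVec, ← Complex.exp_add, inner_zero_right,
    norm_smul, norm_norm]
  push_cast
  ring_nf

variable {X : Type*} [NormedAddCommGroup X] [NormedSpace ℂ X] [CompleteSpace X]

lemma gaussSq_matrix_le (B : Matrix κ ι ℝ) (x : ι → X) :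
    gaussSq (fun i => ∑ j, B i j • x j) ≤ ‖B‖ ^ 2 * gaussSq x := by
  classical
  let Φ : EuclideanSpace ℝ ι →L[ℝ] X :=
    ∑ j, (EuclideanSpace.proj j : EuclideanSpace ℝ ι →L[ℝ] ℝ).smulRight (x j)
  have hΦ (v : EuclideanSpace ℝ ι) : Φ v = ∑ j, v j • x j := by simp [Φ]
  have htr (v : EuclideanSpace ℝ κ) : ∑ i, v i • ∑ j, B i j • x j =
      Φ ((Matrix.toEuclideanLin Bᵀ).toContinuousLinearMap v) := by
    simp_rw [hΦ, Finset.smul_sum, smul_smul]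
    rw [Finset.sum_comm]
    simp [Matrix.mulVec, dotProduct, Finset.sum_smul, mul_comm]
  have h := integral_norm_sq_le_conv
    ((stdGaussian (EuclideanSpace ℝ κ)).map (Matrix.toEuclideanLin Bᵀ).toContinuousLinearMap)
    (multivariateGaussian 0 (‖B‖ ^ 2 • 1 - Bᵀ * B)) integral_id_multivariateGaussian Φ
  rw [map_transpose_stdGaussian_conv, integral_map (by fun_prop) (by fun_prop),
    integral_map (by fun_prop) (by fun_prop)] at h
  simpa only [gaussSq, htr, ← hΦ, map_smul, norm_smul, mul_pow, norm_norm, integral_const_mul]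
    using h

variable [DecidableEq κ]

lemma PropAlphaWith.radSq_real_matrix_le {α : ℝ} (hα : PropAlphaWith X α) (B : Matrix κ ι ℝ)
    (x : ι → X) :
    gaussAbsMoment ^ 2 * radSq (fun i => ∑ j, B i j • x j) ≤ ‖B‖ ^ 2 * (α ^ 2 * radSq x) :=
  (sq_gaussAbsMoment_mul_radSq_le _).trans <| (gaussSq_matrix_le B x).trans <|
    mul_le_mul_of_nonneg_left (hα.gaussSq_le x) (sq_nonneg _)

lemma PropAlphaWith.radSq_matrix_le {α : ℝ} (hα : PropAlphaWith X α) (A : Matrix κ ι ℂ)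
    (x : ι → X) :
    gaussAbsMoment ^ 2 * radSq (fun i => ∑ j, A i j • x j) ≤ 4 * ‖A‖ ^ 2 * (α ^ 2 * radSq x) := by
  have hsplit : (fun i => ∑ j, A i j • x j) = fun i =>
      (∑ j, A.map Complex.reCLM i j • x j) + Complex.I • ∑ j, A.map Complex.imCLM i j • x j := by
    funext i
    rw [Finset.smul_sum, ← Finset.sum_add_distrib]
    refine Finset.sum_congr rfl fun j _ => ?_
    rw [← Complex.coe_smul, ← Complex.coe_smul, smul_smul, ← add_smul, mul_comm]
    simp [Complex.re_add_im]
  have hpart (φ : ℂ →L[ℝ] ℝ) (hφ : ‖φ‖ ≤ 1) :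
      gaussAbsMoment ^ 2 * radSq (fun i => ∑ j, A.map φ i j • x j) ≤
        ‖A‖ ^ 2 * (α ^ 2 * radSq x) := by
    refine (hα.radSq_real_matrix_le (A.map φ) x).trans ?_
    have := radSq_nonneg x
    gcongr
    exact l2_opNorm_map_le φ hφ
  have hre := hpart Complex.reCLM Complex.reCLM_norm.le
  have him := hpart Complex.imCLM Complex.imCLM_norm.le
  have hadd := radSq_add_le (fun i => ∑ j, A.map Complex.reCLM i j • x j)
    fun i => Complex.I • ∑ j, A.map Complex.imCLM i j • x j
  rw [← hsplit, radSq_const_smul, Complex.norm_I, one_pow, one_mul] at hadd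
  have := mul_le_mul_of_nonneg_left hadd (sq_nonneg gaussAbsMoment)
  linarith

end GaussianContraction

section LaurentFunctionalCalculus

open scoped LaurentPolynomial

/-- Evaluation of Laurent polynomials at a unit `u` of a possibly noncommutative algebra. -/
def laurentEval {R A : Type*} [CommSemiring R] [Semiring A] [Algebra R A] (u : Aˣ) :
    R[T;T⁻¹] →ₐ[R] A :=
  AddMonoidAlgebra.lift R A ℤ ((Units.coeHom A).comp (zpowersHom Aˣ u))

variable {R A : Type*} [CommSemiring R] [Semiring A] [Algebra R A]

lemma laurentEval_apply (u : Aˣ) (a : R[T;T⁻¹]) :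
    laurentEval u a = ∑ k ∈ a.coeff.support, a.coeff k • (↑(u ^ k) : A) := by
  rw [laurentEval, AddMonoidAlgebra.lift_apply]
  rfl

lemma laurentEval_T (u : Aˣ) (k : ℤ) :
    laurentEval u (LaurentPolynomial.T k : R[T;T⁻¹]) = ↑(u ^ k) := by
  rw [laurentEval, LaurentPolynomial.T, AddMonoidAlgebra.lift_single, one_smul]
  rfl

lemma kappa_apply (z : Circle) : kappa z = z := rfl

/-- The coordinate function `κ` as a unit of `C(𝕋)`. -/
def kappaUnit : C(Circle, ℂ)ˣ where
  val := kappa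
  inv := star kappa
  val_inv := by ext z; simp [kappa_apply, Complex.mul_conj]
  inv_val := by ext z; simp [kappa_apply, mul_comm, Complex.mul_conj]

lemma kappaUnit_zpow_apply (k : ℤ) (z : Circle) :
    (↑(kappaUnit ^ k) : C(Circle, ℂ)) z = (z ^ k : Circle) := by
  let eval : C(Circle, ℂ) →* ℂ := (Pi.evalMonoidHom _ z).comp ContinuousMap.coeFnMonoidHom
  have eval_kappaUnit : Units.map eval kappaUnit = Circle.toUnits z := Units.ext rfl
  calc (↑(kappaUnit ^ k) : C(Circle, ℂ)) z = ↑(Units.map eval (kappaUnit ^ k)) := rfl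
    _ = ↑(Circle.toUnits (z ^ k)) := by rw [map_zpow, eval_kappaUnit, map_zpow]
    _ = (z ^ k : Circle) := rfl

lemma norm_kappaUnit_zpow_le (k : ℤ) : ‖(↑(kappaUnit ^ k) : C(Circle, ℂ))‖ ≤ 1 := by
  refine (ContinuousMap.norm_le _ zero_le_one).mpr fun z => ?_
  rw [kappaUnit_zpow_apply, Circle.norm_coe]

lemma denseRange_laurentEval_kappaUnit :
    DenseRange (laurentEval kappaUnit : ℂ[T;T⁻¹] →ₐ[ℂ] C(Circle, ℂ)) := by
  have separates : (StarAlgebra.adjoin ℂ {kappa}).SeparatesPoints := fun x y hxy =>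
    ⟨kappa,
      ⟨kappa, StarAlgebra.self_mem_adjoin_singleton ℂ kappa, rfl⟩, Circle.coe_injective.ne hxy⟩
  have adjoin_le : (StarAlgebra.adjoin ℂ {kappa}).toSubalgebra ≤
      (laurentEval kappaUnit : ℂ[T;T⁻¹] →ₐ[ℂ] C(Circle, ℂ)).range := by
    rw [StarAlgebra.adjoin_toSubalgebra, Algebra.adjoin_le_iff, Set.star_singleton]
    rintro _ (rfl | rfl)
    · exact ⟨LaurentPolynomial.T 1, (laurentEval_T _ _).trans (by rw [zpow_one]; rfl)⟩
    · exact ⟨LaurentPolynomial.T (-1), (laurentEval_T _ _).trans (by rw [zpow_neg_one]; rfl)⟩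
  have h := ContinuousMap.starSubalgebra_topologicalClosure_eq_top_of_separatesPoints _ separates
  have dense_adjoin : Dense (StarAlgebra.adjoin ℂ {kappa} : Set C(Circle, ℂ)) := by
    rw [dense_iff_closure_eq, ← StarSubalgebra.topologicalClosure_coe, h, StarSubalgebra.coe_top]
  exact dense_adjoin.mono adjoin_le

lemma exists_algHom_extension {𝕜 A B C : Type*} [NontriviallyNormedField 𝕜] [Ring A] [Algebra 𝕜 A]
    [NormedRing B] [NormedAlgebra 𝕜 B] [NormedRing C] [NormedAlgebra 𝕜 C] [CompleteSpace C]
    (Φ : A →ₐ[𝕜] B) (hΦ : DenseRange Φ) (Ψ : A →ₐ[𝕜] C) {M : ℝ} (h : ∀ a, ‖Ψ a‖ ≤ M * ‖Φ a‖) :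
    ∃ w : B →ₐ[𝕜] C, (∀ a, w (Φ a) = Ψ a) ∧ ∀ b, ‖w b‖ ≤ M * ‖b‖ := by
  let E := Ψ.toLinearMap.extendOfNorm Φ.toLinearMap
  have E_apply (a : A) : E (Φ a) = Ψ a := LinearMap.extendOfNorm_eq hΦ ⟨M, h⟩ a
  have map_one : E 1 = 1 := by simpa using E_apply 1
  have map_mul (x y : B) : E (x * y) = E x * E y := by
    refine hΦ.induction_on₂ (p := fun x y => E (x * y) = E x * E y)
      (isClosed_eq (by fun_prop) (by fun_prop)) (fun a b => ?_) x y
    rw [← _root_.map_mul, E_apply, E_apply, E_apply, _root_.map_mul]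
  exact ⟨AlgHom.ofLinearMap E.toLinearMap map_one map_mul, E_apply,
    LinearMap.norm_extendOfNorm_apply_le hΦ M h⟩

end LaurentFunctionalCalculus

section ZPowers

variable {X : Type*} [NormedAddCommGroup X] [NormedSpace ℂ X]

lemma RBdd.mono {F G : Set (X →L[ℂ] X)} (hG : RBdd G) (h : F ⊆ G) : RBdd F := by
  obtain ⟨C, hC, hG⟩ := hG
  exact ⟨C, hC, fun n T x hT => hG n T x fun k => h (hT k)⟩

theorem PropAlphaWith.rBdd_range_zpow {α : ℝ} (hα : PropAlphaWith X α) {u : (X →L[ℂ] X)ˣ}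
    {w : C(Circle, ℂ) →ₐ[ℂ] (X →L[ℂ] X)} (hu : w kappa = u) {M : ℝ} (hw : ∀ f, ‖w f‖ ≤ M * ‖f‖) :
    RBdd (Set.range fun k : ℤ => (↑(u ^ k) : X →L[ℂ] X)) := by
  refine (hα.rBdd_map_unitBall (K := Circle) isometry_subtype_coe w hw).mono ?_
  rintro _ ⟨k, rfl⟩
  have map_kappaUnit : Units.map (w : C(Circle, ℂ) →* (X →L[ℂ] X)) kappaUnit = u := Units.ext hu
  refine ⟨↑(kappaUnit ^ k), by simpa using norm_kappaUnit_zpow_le k, ?_⟩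
  change (↑(Units.map (w : C(Circle, ℂ) →* (X →L[ℂ] X)) (kappaUnit ^ k)) : X →L[ℂ] X) = ↑(u ^ k)
  rw [map_zpow, map_kappaUnit]

lemma coe_toUnit_zpow (T : X ≃L[ℂ] X) (k : ℤ) :
    (↑(T.toUnit ^ k) : X →L[ℂ] X) = (T ^ k : X ≃L[ℂ] X) := by
  have h := map_zpow (ContinuousLinearEquiv.unitsEquiv ℂ X).symm T k
  exact congrArg Units.val h.symm

end ZPowers

section Toeplitz

open MeasureTheory AddCircle
open scoped Matrix.Norms.L2Operator LaurentPolynomial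

lemma norm_sum_smul_sq_of_orthonormal {𝕜 E ι : Type*} [RCLike 𝕜] [SeminormedAddCommGroup E]
    [InnerProductSpace 𝕜 E] [Fintype ι] {v : ι → E} (hv : Orthonormal 𝕜 v) (c : ι → 𝕜) :
    ‖∑ i, c i • v i‖ ^ 2 = ∑ i, ‖c i‖ ^ 2 := by
  rw [← RCLike.ofReal_inj (K := 𝕜), RCLike.ofReal_pow, ← inner_self_eq_norm_sq_to_K, hv.inner_sum]
  push_cast
  exact Finset.sum_congr rfl fun i _ => RCLike.conj_mul _

lemma fourierCoeff_mul_fourier {T : ℝ} [Fact (0 < T)] (f : AddCircle T → ℂ) (i j : ℤ) :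
    fourierCoeff (fun t => f t * fourier j t) i = fourierCoeff f (i - j) := by
  refine integral_congr_ae (.of_forall fun t => ?_)
  simp only [smul_eq_mul]
  rw [show -(i - j) = -i + j by ring, fourier_add]
  ring

lemma inner_fourierLp_toLp {T : ℝ} [Fact (0 < T)] (f : C(AddCircle T, ℂ)) (i : ℤ) :
    inner ℂ (fourierLp 2 i) (ContinuousMap.toLp 2 haarAddCircle ℂ f) = fourierCoeff f i := by
  rw [← coe_fourierBasis, ← HilbertBasis.repr_apply_apply, fourierBasis_repr, fourierCoeff_toLp]

lemma fourierCoeff_sum_smul {T : ℝ} [Fact (0 < T)] {ι : Type*} [Fintype ι] (c : ι → ℂ)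
    (f : ι → C(AddCircle T, ℂ)) (n : ℤ) :
    fourierCoeff (∑ i, c i • f i : C(AddCircle T, ℂ)) n = ∑ i, c i * fourierCoeff (f i) n := by
  simp only [← inner_fourierLp_toLp, map_sum, map_smul, inner_sum, inner_smul_right]

lemma norm_toLp_mul_le {T : ℝ} [Fact (0 < T)] (f g : C(AddCircle T, ℂ)) :
    ‖ContinuousMap.toLp 2 haarAddCircle ℂ (f * g)‖ ≤
      ‖f‖ * ‖ContinuousMap.toLp 2 haarAddCircle ℂ g‖ := by
  refine Lp.norm_le_mul_norm_of_ae_le_mul ?_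
  filter_upwards [ContinuousMap.coeFn_toLp (𝕜 := ℂ) (p := 2) haarAddCircle (f * g),
    ContinuousMap.coeFn_toLp (𝕜 := ℂ) (p := 2) haarAddCircle g] with t hfg hg
  rw [hfg, hg, ContinuousMap.mul_apply, norm_mul]
  gcongr
  exact f.norm_coe_le_norm t

lemma l2_opNorm_fourierCoeff_sub_le {T : ℝ} [Fact (0 < T)] (f : C(AddCircle T, ℂ))
    (I J : Finset ℤ) :
    ‖Matrix.of fun (i : I) (j : J) => fourierCoeff f (i - j)‖ ≤ ‖f‖ := by
  rw [Matrix.l2_opNorm_def]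
  refine ContinuousLinearMap.opNorm_le_bound _ (norm_nonneg _) fun u => ?_
  let g : C(AddCircle T, ℂ) := ∑ j : J, u j • fourier (j : ℤ)
  have norm_g : ‖ContinuousMap.toLp 2 haarAddCircle ℂ g‖ ^ 2 = ‖u‖ ^ 2 := by
    simp only [g, map_sum, map_smul]
    rw [EuclideanSpace.norm_sq_eq]
    exact norm_sum_smul_sq_of_orthonormal (orthonormal_fourier.comp _ Subtype.val_injective) _
  have coeff_mul (i : ℤ) : fourierCoeff (f * g) i = ∑ j : J, fourierCoeff f (i - j) * u j := by
    have : f * g = ∑ j : J, u j • (f * fourier (j : ℤ)) := by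
      simp only [g, Finset.mul_sum, mul_smul_comm]
    simp only [this, fourierCoeff_sum_smul, mul_comm (u _)]
    exact Finset.sum_congr rfl fun j _ => congrArg (· * u j) (fourierCoeff_mul_fourier f i j)
  have bessel := orthonormal_fourier.sum_inner_products_le
    (ContinuousMap.toLp 2 haarAddCircle ℂ (f * g)) (s := I)
  simp only [inner_fourierLp_toLp, coeff_mul] at bessel
  refine le_of_sq_le_sq ?_ (by positivity)
  calc _ = ∑ i ∈ I, ‖∑ j : J, fourierCoeff f (i - j) * u j‖ ^ 2 := by
        rw [← Finset.sum_coe_sort, EuclideanSpace.norm_sq_eq]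
        rfl
    _ ≤ (‖f‖ * ‖ContinuousMap.toLp 2 haarAddCircle ℂ g‖) ^ 2 :=
      bessel.trans (pow_le_pow_left₀ (norm_nonneg _) (norm_toLp_mul_le f g) 2)
    _ = (‖f‖ * ‖u‖) ^ 2 := by rw [mul_pow, norm_g, ← mul_pow]

lemma fourierCoeff_laurentEval_kappaUnit {T : ℝ} [Fact (0 < T)] (a : ℂ[T;T⁻¹]) (n : ℤ) :
    fourierCoeff (fun t : AddCircle T => laurentEval kappaUnit a (toCircle t)) n = a.coeff n := by
  have h (t : AddCircle T) : laurentEval kappaUnit a (toCircle t) =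
      (∑ k : a.coeff.support, a.coeff k • fourier (k : ℤ) : C(AddCircle T, ℂ)) t := by
    rw [Finset.sum_coe_sort a.coeff.support fun k => a.coeff k • (fourier k : C(AddCircle T, ℂ))]
    simp [laurentEval_apply, kappaUnit_zpow_apply, fourier_apply, toCircle_zsmul]
  simp_rw [h, fourierCoeff_sum_smul, fourierCoeff_fourier]
  rw [Finset.sum_coe_sort a.coeff.support fun k => a.coeff k * (Pi.single k 1 : ℤ → ℂ) n]
  simp +contextual [Pi.single_apply]

lemma l2_opNorm_laurent_coeff_sub_le (a : ℂ[T;T⁻¹]) (I J : Finset ℤ) :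
    ‖Matrix.of fun (i : I) (j : J) => a.coeff (i - j)‖ ≤ ‖laurentEval kappaUnit a‖ := by
  let f : C(AddCircle (1 : ℝ), ℂ) :=
    (laurentEval kappaUnit a).comp ⟨toCircle, continuous_toCircle⟩
  have coeff_f (n : ℤ) : fourierCoeff f n = a.coeff n := fourierCoeff_laurentEval_kappaUnit a n
  simp_rw [← coeff_f]
  refine (l2_opNorm_fourierCoeff_sub_le f I J).trans ?_
  exact (ContinuousMap.norm_le _ (norm_nonneg _)).mpr fun t =>
    (laurentEval kappaUnit a).norm_coe_le_norm _

end Toeplitz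

section Transference

open scoped LaurentPolynomial Matrix.Norms.L2Operator

lemma laurentEval_eq_zpow_mul_sum {R A : Type*} [CommSemiring R] [Semiring A] [Algebra R A]
    (u : Aˣ) (a : R[T;T⁻¹]) {i : ℤ} {J : Finset ℤ} (hJ : ∀ k ∈ a.coeff.support, i - k ∈ J) :
    laurentEval u a = ↑(u ^ i) * ∑ j ∈ J, a.coeff (i - j) • (↑(u ^ (-j)) : A) := by
  rw [laurentEval_apply, Finset.mul_sum]
  simp only [mul_smul_comm, ← Units.val_mul, ← zpow_add]
  refine Finset.sum_of_injOn (fun k => i - k) (sub_right_injective.injOn) hJ ?_ fun k _ => by simp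
  intro j _ hj
  have : a.coeff (i - j) = 0 := by
    by_contra h
    exact hj ⟨i - j, Finsupp.mem_support_iff.mpr h, sub_sub_cancel i j⟩
  rw [this, zero_smul]

variable {X : Type*} [NormedAddCommGroup X] [NormedSpace ℂ X]

lemma radSq_const {ι : Type*} [Fintype ι] [DecidableEq ι] (x : X) :
    radSq (fun _ : ι => x) = Fintype.card ι * ‖x‖ ^ 2 := by
  simpa using radSq_smul_const (fun _ : ι => 1) x

variable [CompleteSpace X]

-- Averaging `x ↦ uⁱ (u⁻ⁱ p(u) x)` over `i ∈ I` turns `p(u)` into a truncated Toeplitz matrix.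
lemma PropAlphaWith.card_mul_norm_laurentEval_sq_le {α : ℝ} (hα : PropAlphaWith X α)
    {u : (X →L[ℂ] X)ˣ} {C : ℝ}
    (hu : RBddWith (Set.range fun k : ℤ => (↑(u ^ k) : X →L[ℂ] X)) C) (a : ℂ[T;T⁻¹])
    {I J : Finset ℤ} (hIJ : ∀ i ∈ I, ∀ k ∈ a.coeff.support, i - k ∈ J) (x : X) :
    I.card * (gaussAbsMoment * ‖laurentEval u a x‖) ^ 2 ≤
      J.card * (2 * C ^ 2 * α * ‖laurentEval kappaUnit a‖ * ‖x‖) ^ 2 := by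
  let A : Matrix I J ℂ := Matrix.of fun i j => a.coeff (i - j)
  let v (j : J) : X := (↑(u ^ (-(j : ℤ))) : X →L[ℂ] X) x
  have factor (i : I) :
      laurentEval u a x = (↑(u ^ (i : ℤ)) : X →L[ℂ] X) (∑ j, A i j • v j) := by
    rw [laurentEval_eq_zpow_mul_sum u a (hIJ i i.2), ← Finset.sum_coe_sort]
    simp [A, v]
  have lower : I.card * ‖laurentEval u a x‖ ^ 2 ≤ C ^ 2 * radSq fun i => ∑ j, A i j • v j := by
    have h := hu.radSq_le (T := fun i : I => (↑(u ^ (i : ℤ)) : X →L[ℂ] X))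
      (fun i => ⟨i, rfl⟩) fun i => ∑ j, A i j • v j
    simpa only [← factor, radSq_const, Fintype.card_coe] using h
  have upper : radSq v ≤ C ^ 2 * (J.card * ‖x‖ ^ 2) := by
    have h := hu.radSq_le (T := fun j : J => (↑(u ^ (-(j : ℤ))) : X →L[ℂ] X))
      (fun j => ⟨-j, rfl⟩) fun _ => x
    simpa only [radSq_const, Fintype.card_coe] using h
  calc I.card * (gaussAbsMoment * ‖laurentEval u a x‖) ^ 2
      = gaussAbsMoment ^ 2 * (I.card * ‖laurentEval u a x‖ ^ 2) := by ring
    _ ≤ gaussAbsMoment ^ 2 * (C ^ 2 * radSq fun i => ∑ j, A i j • v j) := by gcongr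
    _ = C ^ 2 * (gaussAbsMoment ^ 2 * radSq fun i => ∑ j, A i j • v j) := by ring
    _ ≤ C ^ 2 * (4 * ‖A‖ ^ 2 * (α ^ 2 * radSq v)) := by grw [hα.radSq_matrix_le A v]
    _ ≤ C ^ 2 * (4 * ‖laurentEval kappaUnit a‖ ^ 2 * (α ^ 2 * (C ^ 2 * (J.card * ‖x‖ ^ 2)))) := by
      grw [upper, l2_opNorm_laurent_coeff_sub_le a I J]
    _ = _ := by ring

theorem PropAlphaWith.norm_laurentEval_le {α : ℝ} (hα : PropAlphaWith X α)
    {u : (X →L[ℂ] X)ˣ} {C : ℝ}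
    (hu : RBddWith (Set.range fun k : ℤ => (↑(u ^ k) : X →L[ℂ] X)) C) (a : ℂ[T;T⁻¹]) :
    ‖laurentEval u a‖ ≤ 3 * C ^ 2 * |α| / gaussAbsMoment * ‖laurentEval kappaUnit a‖ := by
  have moment_pos := gaussAbsMoment_pos
  refine ContinuousLinearMap.opNorm_le_bound _ (by positivity) fun x => ?_
  obtain ⟨d, hd⟩ : ∃ d : ℕ, ∀ k ∈ a.coeff.support, k.natAbs ≤ d :=
    ⟨a.coeff.support.sup Int.natAbs, fun k hk => Finset.le_sup hk⟩
  have h := hα.card_mul_norm_laurentEval_sq_le hu a (I := Finset.Icc 0 (2 * d))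
    (J := Finset.Icc (-d) (3 * d)) (fun i hi k hk => by
      have := hd k hk
      rw [Finset.mem_Icc] at hi ⊢
      omega) x
  have card_I : ((Finset.Icc (0 : ℤ) (2 * d)).card : ℝ) = 2 * d + 1 := by
    rw [Int.card_Icc, sub_zero]
    norm_cast
  have card_J : ((Finset.Icc (-d : ℤ) (3 * d)).card : ℝ) ≤ 2 * (2 * d + 1) := by
    rw [Int.card_Icc]
    norm_cast
    omega
  have sq_le : (gaussAbsMoment * ‖laurentEval u a x‖) ^ 2 ≤
      (3 * C ^ 2 * |α| * ‖laurentEval kappaUnit a‖ * ‖x‖) ^ 2 := by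
    refine le_of_mul_le_mul_left ?_ (show (0 : ℝ) < 2 * d + 1 by positivity)
    calc _ ≤ _ := card_I ▸ h
      _ ≤ 2 * (2 * d + 1) * (2 * C ^ 2 * α * ‖laurentEval kappaUnit a‖ * ‖x‖) ^ 2 := by gcongr
      _ = (2 * d + 1) * (8 * (C ^ 2 * |α| * ‖laurentEval kappaUnit a‖ * ‖x‖) ^ 2) := by
        simp only [mul_pow, sq_abs]
        ring
      _ ≤ (2 * d + 1) * (9 * (C ^ 2 * |α| * ‖laurentEval kappaUnit a‖ * ‖x‖) ^ 2) := by
        gcongr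
        norm_num
      _ = _ := by ring
  rw [div_mul_eq_mul_div, div_mul_eq_mul_div, le_div_iff₀' moment_pos]
  exact le_of_sq_le_sq sq_le (by positivity)

theorem PropAlphaWith.exists_circle_algHom {α : ℝ} (hα : PropAlphaWith X α) {u : (X →L[ℂ] X)ˣ}
    (hu : RBdd (Set.range fun k : ℤ => (↑(u ^ k) : X →L[ℂ] X))) :
    ∃ w : C(Circle, ℂ) →ₐ[ℂ] (X →L[ℂ] X), w kappa = u ∧ ∃ M : ℝ, ∀ f, ‖w f‖ ≤ M * ‖f‖ := by
  obtain ⟨C, -, hC⟩ := hu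
  obtain ⟨w, hw, w_le⟩ := exists_algHom_extension _ denseRange_laurentEval_kappaUnit _
    (hα.norm_laurentEval_le hC)
  refine ⟨w, ?_, _, w_le⟩
  have h := hw (LaurentPolynomial.T 1)
  rw [laurentEval_T, laurentEval_T, zpow_one, zpow_one] at h
  exact h

end Transference

/-- Proposition 6.3 (2): on a complex Banach space with property (α), the set
`{T^k : k ∈ ℤ}` is R-bounded iff there is a bounded unital algebra homomorphism
`w : C(𝕋) → B(X)` with `w(κ) = T`. -/
theorem rBdd_zpowers_iff_circle_homomorphism
    {X : Type*} [NormedAddCommGroup X] [NormedSpace ℂ X] [CompleteSpace X]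
    (hX : ∃ α : ℝ, PropAlphaWith X α)
    (T : X ≃L[ℂ] X) :
    RBdd {S : X →L[ℂ] X | ∃ k : ℤ, S = (T ^ k : X ≃L[ℂ] X)} ↔
      ∃ w : C(Circle, ℂ) →ₐ[ℂ] (X →L[ℂ] X),
        w kappa = (T : X →L[ℂ] X) ∧
        ∃ M : ℝ, ∀ f : C(Circle, ℂ), ‖w f‖ ≤ M * ‖f‖ := by
  obtain ⟨α, hα⟩ := hX
  have zpowers_eq : {S : X →L[ℂ] X | ∃ k : ℤ, S = (T ^ k : X ≃L[ℂ] X)} =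
      Set.range fun k : ℤ => (↑(T.toUnit ^ k) : X →L[ℂ] X) :=
    Set.ext fun S => exists_congr fun k => by rw [← coe_toUnit_zpow]; exact eq_comm
  rw [zpowers_eq]
  exact ⟨fun h => hα.exists_circle_algHom h, fun ⟨_, hw, _, hM⟩ => hα.rBdd_range_zpow hw hM⟩

end
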